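/- Every n×n quaternion matrix A is similar over ℍ to a matrix B of the following form (a 'modified Jordan matrix'): B is block upper bidiagonal with respect to a partition (n₁,…,n_s); the diagonal blocks are λ_t·I_{n_t} where each λ_t is a complex number with nonnegative imaginary part and λ₁ ⪰ λ₂ ⪰ ⋯ ⪰ λ_s; the superdiagonal block G_{t,t+1} equals 0 if λ_t ≠ λ_{t+1}, while if λ_t = λ_{t+1} then n_t ≥ n_{t+1} and G_{t,t+1} = [I_{n_{t+1}}; 0] of size n_t×n_{t+1}; all other blocks are zero. -/

import Mathlib

open Matrix
open scoped Quaternion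

noncomputable section

/-- A quaternion matrix `U` is unitary if `Uᴴ * U = 1`. -/
def IsUnitaryM {m : Type*} [Fintype m] [DecidableEq m] (U : Matrix m m ℍ[ℝ]) : Prop :=
  Uᴴ * U = 1

/-- `A` and `B` are unitarily similar if `A = Uᴴ * B * U` for some unitary `U`. -/
def UnitarilySimilar {m : Type*} [Fintype m] [DecidableEq m] (A B : Matrix m m ℍ[ℝ]) : Prop :=
  ∃ U : Matrix m m ℍ[ℝ], IsUnitaryM U ∧ A = Uᴴ * B * U

/-- The embedding of `ℂ = ℝ + ℝi` into the quaternions. -/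
def cq (z : ℂ) : ℍ[ℝ] := ⟨z.re, z.im, 0, 0⟩

/-- The ordering `⪰` on complex numbers: `a+bi ⪰ c+di` iff (`a ≥ c` and `b = d`) or `b > d`. -/
def csucceq (z w : ℂ) : Prop := (w.re ≤ z.re ∧ z.im = w.im) ∨ w.im < z.im

/-- `A` and `B` are similar over `ℍ`: `A = S⁻¹ * B * S` for some invertible `S`. -/
def SimilarQ {m : Type*} [Fintype m] [DecidableEq m] (A B : Matrix m m ℍ[ℝ]) : Prop :=
  ∃ S : (Matrix m m ℍ[ℝ])ˣ, A = (S⁻¹).val * B * S.val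

/-- `psum sz m` is the sum of the first `m` block sizes: the starting index of block `m`. -/
def psum {s : ℕ} (sz : Fin s → ℕ) (m : ℕ) : ℕ :=
  ∑ t ∈ Finset.range m, if h : t < s then sz ⟨t, h⟩ else 0

/-- Row/column index `r` belongs to the `i`-th diagonal block of the partition `sz`. -/
def InBlock {s : ℕ} (sz : Fin s → ℕ) (i : Fin s) (r : ℕ) : Prop :=
  psum sz i ≤ r ∧ r < psum sz ((i : ℕ) + 1)

/-- `B` is a modified Jordan matrix: block upper bidiagonal for a partition `sz` with `s`
blocks; diagonal blocks `λ_t • I` with `λ_t` complex with nonnegative imaginary part and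
`λ_1 ⪰ ⋯ ⪰ λ_s`; superdiagonal block `G_{t,t+1} = 0` if `λ_t ≠ λ_{t+1}` while if
`λ_t = λ_{t+1}` then `n_t ≥ n_{t+1}` and `G_{t,t+1} = [I; 0]`; all other blocks zero. -/
def IsModifiedJordan {n : ℕ} (B : Matrix (Fin n) (Fin n) ℍ[ℝ]) : Prop :=
  ∃ (s : ℕ) (sz : Fin s → ℕ) (lam : Fin s → ℂ),
    (∀ t, 0 < sz t) ∧ (∑ t, sz t) = n ∧
    (∀ t, 0 ≤ (lam t).im) ∧
    (∀ (t : Fin s) (h : (t : ℕ) + 1 < s), csucceq (lam t) (lam ⟨(t : ℕ) + 1, h⟩)) ∧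
    (∀ (x y : Fin n) (t : Fin s), InBlock sz t x → InBlock sz t y →
        B x y = if x = y then cq (lam t) else 0) ∧
    (∀ (x y : Fin n) (t u : Fin s), InBlock sz t x → InBlock sz u y →
        (u : ℕ) ≠ (t : ℕ) → (u : ℕ) ≠ (t : ℕ) + 1 → B x y = 0) ∧
    (∀ (t : Fin s) (h : (t : ℕ) + 1 < s),
        (lam t ≠ lam ⟨(t : ℕ) + 1, h⟩ →
          ∀ x y : Fin n, InBlock sz t x → InBlock sz ⟨(t : ℕ) + 1, h⟩ y → B x y = 0) ∧
        (lam t = lam ⟨(t : ℕ) + 1, h⟩ →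
          sz ⟨(t : ℕ) + 1, h⟩ ≤ sz t ∧
          ∀ x y : Fin n, InBlock sz t x → InBlock sz ⟨(t : ℕ) + 1, h⟩ y →
            B x y = if (x : ℕ) - psum sz t = (y : ℕ) - psum sz ((t : ℕ) + 1)
              then 1 else 0))

/-! A quaternionic map `T` is complex linear on the underlying complex space, and multiplication by
`j` exchanges its generalized eigenspaces at `z` and at the conjugate of `z`. Hence the space is the
direct sum, over `z` in the closed upper half plane, of the quaternionic spans `W z` of the complex
generalized eigenspaces `K z`. Each `W z` has a basis arranged in rows of decreasing lengths such
that `T - z` maps each row into the next one and kills its surplus elements. If `z` is real, `T - z`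
is quaternion linear and nilpotent on `W z`. Otherwise `T - z` is only complex linear, but it is
nilpotent on `K z`, and a complex basis of `K z` is a quaternionic basis of `W z` because `K z` and
`j • K z` are independent. Such a basis for a nilpotent map `N` on `W` is built from one of `N W`:
lift its first row through `N`, and append a basis of a complement of `N W ∩ ker N` in `W ∩ ker N`.
The rows, sorted by eigenvalue and then by position, are the blocks of a modified Jordan matrix. -/

section WeyrBasis

variable {D V : Type*} [DivisionRing D] [AddCommGroup V] [Module D V]

theorem exists_linearIndepOn_Iio_span_range_eq (C : Submodule D V) [FiniteDimensional D C] :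
    ∃ (d : ℕ) (c : ℕ → V), (∀ j, d ≤ j → c j = 0) ∧ LinearIndepOn D c (Set.Iio d) ∧
      Submodule.span D (Set.range c) = C := by
  let b := Module.finBasis D C
  let d := Module.finrank D C
  let c : ℕ → V := fun j => if h : j < d then b ⟨j, h⟩ else 0
  have hcb : c ∘ Fin.val = C.subtype ∘ b := funext fun k => dif_pos k.2
  have hc0 : ∀ j, d ≤ j → c j = 0 := fun j hj => dif_neg hj.not_gt
  refine ⟨d, c, hc0, ?_, le_antisymm (Submodule.span_le.2 ?_) ?_⟩
  · rw [← Fin.range_val, linearIndepOn_range_iff Fin.val_injective, hcb]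
    exact b.linearIndependent.map' C.subtype C.ker_subtype
  · rintro _ ⟨j, rfl⟩
    by_cases hj : j < d
    · simp only [c, dif_pos hj, SetLike.coe_mem, SetLike.mem_coe]
    · simp only [hc0 j (not_lt.1 hj), SetLike.mem_coe, zero_mem]
  · calc C = Submodule.span D (Set.range (c ∘ Fin.val)) := by
          rw [hcb, Set.range_comp, Submodule.span_image, b.span_eq, Submodule.map_subtype_top]
      _ ≤ Submodule.span D (Set.range c) :=
          Submodule.span_mono (Set.range_comp_subset_range _ _)

theorem linearIndepOn_union_of_map {R M M' ι : Type*} [Ring R] [AddCommGroup M] [Module R M]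
    [AddCommGroup M'] [Module R M'] {f : M →ₗ[R] M'} {v : ι → M} {s t : Set ι}
    (hs : LinearIndepOn R v s) (hker : ∀ i ∈ s, f (v i) = 0) (ht : LinearIndepOn R (f ∘ v) t) :
    LinearIndepOn R v (s ∪ t) := by
  refine hs.union (ht.of_comp f) (Disjoint.symm ?_)
  have hdisj : Disjoint (Submodule.span R (v '' t)) (LinearMap.ker f) := by
    rw [Set.image_eq_range]
    exact Submodule.range_ker_disjoint ht
  refine hdisj.mono_right (Submodule.span_le.2 ?_)
  rintro _ ⟨i, hi, rfl⟩
  exact hker i hi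

/-- A Weyr basis of a subspace `W` for a map `N` is a basis `e i j`, `j < a i`, arranged in rows
indexed by `i` whose lengths `a i` decrease, such that `N` maps each row into the next one,
`N (e i j) = e (i + 1) j`. Entries `e i j` beyond the length of their row are `0`. The map `N` need
not be linear over the scalars `D`: for a quaternionic map `T`, the notion is used with
`N v = T v - z • v` where `z` is a complex number. -/
structure IsWeyrBasis (D : Type*) {V : Type*} [DivisionRing D] [AddCommGroup V] [Module D V]
    (N : V → V) (W : Submodule D V) (a : ℕ → ℕ) (e : ℕ → ℕ → V) : Prop where
  antitone : Antitone a
  map_eq : ∀ i j, N (e i j) = e (i + 1) j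
  eq_zero : ∀ i j, a i ≤ j → e i j = 0
  linearIndepOn : LinearIndepOn D (Function.uncurry e) {p | p.2 < a p.1}
  span_eq : Submodule.span D (Set.range (Function.uncurry e)) = W

namespace IsWeyrBasis

variable {W : Submodule D V} {a : ℕ → ℕ} {e : ℕ → ℕ → V}

theorem mem {N : V → V} (h : IsWeyrBasis D N W a e) (i j : ℕ) : e i j ∈ W :=
  h.span_eq ▸ Submodule.subset_span ⟨(i, j), rfl⟩

variable {N : V →ₗ[D] V}

/-- The new row splits into preimages of the next row, which are independent because their images
are, and elements of the kernel. -/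
theorem linearIndepOn_cons
    (h : IsWeyrBasis D N (W.map N) (fun i => a (i + 1)) (fun i => e (i + 1)))
    (h_map : ∀ j, N (e 0 j) = e 1 j) (h_indep : LinearIndepOn D (e 0) (Set.Ico (a 1) (a 0)))
    (h_disj : Disjoint (W.map N) (Submodule.span D (e 0 '' Set.Ico (a 1) (a 0)))) :
    LinearIndepOn D (Function.uncurry e) {p | p.2 < a p.1} := by
  have hN : N ∘ Function.uncurry e = Function.uncurry fun i => e (i + 1) := by
    ext ⟨_ | i, j⟩
    exacts [h_map j, h.map_eq i j]
  have h_tail := LinearIndepOn.image_of_comp (R := D) (Prod.map Nat.succ id) (Function.uncurry e)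
    h.linearIndepOn
  have h_new := LinearIndepOn.image_of_comp (R := D) (Prod.mk 0) (Function.uncurry e) h_indep
  have h_ker : LinearIndepOn D (Function.uncurry e) {p | a (p.1 + 1) ≤ p.2 ∧ p.2 < a p.1} := by
    refine (h_tail.union h_new (h_disj.mono (Submodule.span_le.2 ?_) ?_)).mono ?_
    · rintro _ ⟨_, ⟨p, -, rfl⟩, rfl⟩
      exact h.mem p.1 p.2
    · rw [Set.image_image]
      rfl
    · rintro ⟨_ | i, j⟩ hj
      exacts [Or.inr ⟨j, hj, rfl⟩, Or.inl ⟨(i, j), hj.2, rfl⟩]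
  refine (linearIndepOn_union_of_map (f := N) h_ker ?_ (hN ▸ h.linearIndepOn)).mono ?_
  · rintro p hp
    exact (congrFun hN p).trans (h.eq_zero p.1 p.2 hp.1)
  · rintro p hp
    exact (le_or_gt (a (p.1 + 1)) p.2).imp (⟨·, hp⟩) id

theorem span_range_cons
    (h : IsWeyrBasis D N (W.map N) (fun i => a (i + 1)) (fun i => e (i + 1)))
    (hW : W.map N ≤ W) (h_mem : ∀ j, e 0 j ∈ W) (h_map : ∀ j, N (e 0 j) = e 1 j)
    (h_ker : W ⊓ LinearMap.ker N ≤ W.map N ⊔ Submodule.span D (Set.range (e 0))) :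
    Submodule.span D (Set.range (Function.uncurry e)) = W := by
  set S := Submodule.span D (Set.range (Function.uncurry e))
  have h_memS : ∀ i j, e i j ∈ S := fun i j => Submodule.subset_span ⟨(i, j), rfl⟩
  have hSW : S ≤ W := by
    refine Submodule.span_le.2 ?_
    rintro _ ⟨⟨_ | i, j⟩, rfl⟩
    exacts [h_mem j, hW (h.mem i j)]
  have h_range : W.map N ≤ S := by
    rw [← h.span_eq, Submodule.span_le]
    rintro _ ⟨p, rfl⟩
    exact h_memS _ _
  have h_mapS : W.map N ≤ S.map N := by
    nth_rw 1 [← h.span_eq]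
    refine Submodule.span_le.2 ?_
    rintro _ ⟨⟨_ | i, j⟩, rfl⟩
    exacts [⟨e 0 j, h_memS _ _, h_map j⟩, ⟨e (i + 1) j, h_memS _ _, h.map_eq i j⟩]
  refine le_antisymm hSW fun w hw => ?_
  obtain ⟨s, hs, hsw⟩ := h_mapS (Submodule.mem_map_of_mem hw)
  have h_diff : w - s ∈ S := by
    refine (h_ker.trans (sup_le h_range (Submodule.span_le.2 ?_))) ⟨W.sub_mem hw (hSW hs), ?_⟩
    · rintro _ ⟨j, rfl⟩
      exact h_memS 0 j
    · exact LinearMap.sub_mem_ker_iff.2 hsw.symm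
  exact (Submodule.sub_mem_iff_left S hs).1 h_diff

theorem cons (h : IsWeyrBasis D N (W.map N) (fun i => a (i + 1)) (fun i => e (i + 1)))
    (hW : W.map N ≤ W) (ha : a 1 ≤ a 0) (h_mem : ∀ j, e 0 j ∈ W) (h_map : ∀ j, N (e 0 j) = e 1 j)
    (h_zero : ∀ j, a 0 ≤ j → e 0 j = 0) (h_indep : LinearIndepOn D (e 0) (Set.Ico (a 1) (a 0)))
    (h_disj : Disjoint (W.map N) (Submodule.span D (e 0 '' Set.Ico (a 1) (a 0))))
    (h_ker : W ⊓ LinearMap.ker N ≤ W.map N ⊔ Submodule.span D (Set.range (e 0))) :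
    IsWeyrBasis D N W a e where
  antitone := antitone_nat_of_succ_le fun
    | 0 => ha
    | i + 1 => h.antitone i.le_succ
  map_eq
    | 0 => h_map
    | i + 1 => h.map_eq i
  eq_zero
    | 0 => h_zero
    | i + 1 => h.eq_zero i
  linearIndepOn := linearIndepOn_cons h h_map h_indep h_disj
  span_eq := span_range_cons h hW h_mem h_map h_ker

protected theorem bot (N : V →ₗ[D] V) : IsWeyrBasis D N ⊥ 0 0 where
  antitone := antitone_const
  map_eq _ _ := map_zero N
  eq_zero _ _ _ := rfl
  linearIndepOn := by
    simp only [Pi.zero_apply, not_lt_zero, Set.ofPred_false, linearIndepOn_empty]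
  span_eq := Submodule.span_eq_bot.2 (Set.forall_mem_range.2 fun _ => rfl)

theorem exists_of_map [FiniteDimensional D V] (hW : W.map N ≤ W)
    (h : IsWeyrBasis D N (W.map N) a e) : ∃ a₁ e₁, IsWeyrBasis D N W a₁ e₁ := by
  choose x hxW hNx using h.mem 0
  obtain ⟨C, h_disj, h_sup⟩ := IsModularLattice.exists_disjoint_and_sup_eq
    (inf_le_inf_right (LinearMap.ker N) hW)
  obtain ⟨d, c, hc_zero, hc_indep, rfl⟩ := exists_linearIndepOn_Iio_span_range_eq C
  have hcW : ∀ j, c j ∈ W ⊓ LinearMap.ker N := fun j =>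
    h_sup ▸ Submodule.mem_sup_right (Submodule.subset_span ⟨j, rfl⟩)
  let row (j : ℕ) : V := if j < a 0 then x j else c (j - a 0)
  have row_lift {j : ℕ} (hj : j < a 0) : row j = x j := if_pos hj
  have row_ker {j : ℕ} (hj : a 0 ≤ j) : row j = c (j - a 0) := if_neg hj.not_gt
  have row_comp_add : row ∘ (a 0 + ·) = c := funext fun j => by
    rw [Function.comp_apply, row_ker (Nat.le_add_right _ j), Nat.add_sub_cancel_left]
  have image_add : (a 0 + ·) '' Set.Iio d = Set.Ico (a 0) (a 0 + d) := by
    rw [← Set.Ico_bot, Set.image_const_add_Ico, Nat.bot_eq_zero, Nat.add_zero]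
  have row_mem (j : ℕ) : row j ∈ W := by
    obtain hj | hj := lt_or_ge j (a 0)
    exacts [row_lift hj ▸ hxW j, row_ker hj ▸ (hcW _).1]
  have map_row (j : ℕ) : N (row j) = e 0 j := by
    obtain hj | hj := lt_or_ge j (a 0)
    exacts [row_lift hj ▸ hNx j, row_ker hj ▸ (hcW _).2.trans (h.eq_zero 0 j hj).symm]
  have row_zero (j : ℕ) (hj : a 0 + d ≤ j) : row j = 0 := by
    rw [row_ker (Nat.le_of_add_right_le hj), hc_zero _ (Nat.le_sub_of_add_le' hj)]
  refine ⟨fun | 0 => a 0 + d | i + 1 => a i, fun | 0 => row | i + 1 => e i,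
    cons h hW (Nat.le_add_right _ _) row_mem map_row row_zero ?_ ?_ ?_⟩
  · rw [← image_add]
    exact LinearIndepOn.image_of_comp _ _ (row_comp_add ▸ hc_indep)
  · rw [← image_add, ← Set.image_comp, row_comp_add]
    have hc_ker : Submodule.span D (Set.range c) ≤ LinearMap.ker N :=
      Submodule.span_le.2 (Set.range_subset_iff.2 fun j => (hcW j).2)
    rw [disjoint_assoc, inf_eq_right.2 hc_ker] at h_disj
    exact h_disj.mono_right (Submodule.span_mono (Set.image_subset_range _ _))
  · rw [← h_sup, ← row_comp_add]
    exact sup_le_sup inf_le_left (Submodule.span_mono (Set.range_comp_subset_range _ _))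

end IsWeyrBasis

theorem exists_isWeyrBasis [FiniteDimensional D V] {N : V →ₗ[D] V} {k : ℕ} {W : Submodule D V}
    (hW : W.map N ≤ W) (hk : W ≤ LinearMap.ker (N ^ k)) : ∃ a e, IsWeyrBasis D N W a e := by
  induction k generalizing W with
  | zero =>
    obtain rfl : W = ⊥ := le_bot_iff.1 (hk.trans_eq LinearMap.ker_id)
    exact ⟨0, 0, .bot N⟩
  | succ k ih =>
    have hk' : W.map N ≤ LinearMap.ker (N ^ k) := by
      rwa [Submodule.map_le_iff_le_comap, ← LinearMap.ker_comp, ← Module.End.mul_eq_comp,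
        ← pow_succ]
    obtain ⟨a, e, h⟩ := ih (Submodule.map_mono hW) hk'
    exact h.exists_of_map hW

end WeyrBasis

section ComplexStructure

/-- The quaternion unit `j`. -/
@[simps]
def qj : ℍ[ℝ] := ⟨0, 0, 1, 0⟩

theorem cq_eq_coe (z : ℂ) : cq z = (z : ℍ[ℝ]) := rfl

theorem qj_mul_qj : qj * qj = -1 := by
  ext <;> simp

theorem qj_mul_cq (z : ℂ) : qj * cq z = cq (starRingEnd ℂ z) * qj := by
  ext <;> simp [cq_eq_coe]

theorem exists_eq_cq_add_qj_mul_cq (q : ℍ[ℝ]) : ∃ u w : ℂ, q = cq u + qj * cq w :=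
  ⟨⟨q.re, q.imI⟩, ⟨q.imJ, -q.imK⟩, by ext <;> simp [cq_eq_coe]⟩

theorem cq_mem_center {z : ℂ} (hz : z.im = 0) : cq z ∈ Set.center ℍ[ℝ] :=
  Semigroup.mem_center_iff.2 fun q => by ext <;> simp [cq_eq_coe, hz, mul_comm]

variable {V : Type*} [AddCommGroup V] [Module ℍ[ℝ] V]

theorem qj_smul_qj_smul (v : V) : qj • qj • v = -v := by
  rw [smul_smul, qj_mul_qj, neg_one_smul]

/-- A quaternionic vector space regarded as a complex one, through `cq`. -/
@[reducible]
def complexModule (V : Type*) [AddCommGroup V] [Module ℍ[ℝ] V] : Module ℂ V :=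
  Module.compHom V (Quaternion.ofComplex : ℂ →ₐ[ℝ] ℍ[ℝ]).toRingHom

attribute [local instance] complexModule

theorem complex_smul_eq (z : ℂ) (v : V) : z • v = cq z • v := rfl

instance isScalarTower_complex_quaternion : IsScalarTower ℂ ℍ[ℝ] V :=
  ⟨fun z q v => mul_smul (cq z) q v⟩

instance finiteDimensional_complex [FiniteDimensional ℍ[ℝ] V] : FiniteDimensional ℂ V := by
  have : IsScalarTower ℝ ℂ ℍ[ℝ] := ⟨fun r z q =>
    (congrArg (· • q) (map_smul Quaternion.ofComplex r z)).trans (smul_assoc r (cq z) q)⟩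
  have : Module.Finite ℂ ℍ[ℝ] := Module.Finite.of_restrictScalars_finite ℝ ℂ ℍ[ℝ]
  exact Module.Finite.trans ℍ[ℝ] V

theorem span_quaternion_le {K L : Submodule ℂ V} (hKL : K ≤ L) (hj : ∀ v ∈ K, qj • v ∈ L) :
    (Submodule.span ℍ[ℝ] (K : Set V)).restrictScalars ℂ ≤ L := fun v hv => by
  induction hv using Submodule.closure_induction with
  | zero => exact L.zero_mem
  | add x y _ _ hx hy => exact L.add_mem hx hy
  | smul_mem q v hv =>
    obtain ⟨u, w, rfl⟩ := exists_eq_cq_add_qj_mul_cq q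
    rw [add_smul, mul_smul]
    exact L.add_mem (hKL (K.smul_mem u hv)) (hj _ (K.smul_mem w hv))

theorem linearIndependent_quaternion_of_complex {ι : Type*} {v : ι → V} (hv : LinearIndependent ℂ v)
    (hj : ∀ x ∈ Submodule.span ℂ (Set.range v), qj • x ∈ Submodule.span ℂ (Set.range v) → x = 0) :
    LinearIndependent ℍ[ℝ] v := by
  rw [linearIndependent_iff'] at hv ⊢
  intro s g hg i hi
  choose u w huw using fun i => exists_eq_cq_add_qj_mul_cq (g i)
  have h_split : ∑ i ∈ s, u i • v i + qj • ∑ i ∈ s, w i • v i = 0 := by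
    rw [← hg, Finset.smul_sum, ← Finset.sum_add_distrib]
    refine Finset.sum_congr rfl fun i _ => ?_
    rw [huw i, add_smul, mul_smul, complex_smul_eq, complex_smul_eq]
  have h_span (c : ι → ℂ) : ∑ i ∈ s, c i • v i ∈ Submodule.span ℂ (Set.range v) :=
    Submodule.sum_mem _ fun i _ => Submodule.smul_mem _ _ (Submodule.subset_span ⟨i, rfl⟩)
  have hw : ∑ i ∈ s, w i • v i = 0 := by
    refine hj _ (h_span w) ?_
    rw [eq_neg_of_add_eq_zero_right h_split]
    exact Submodule.neg_mem _ (h_span u)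
  rw [hw, smul_zero, add_zero] at h_split
  rw [huw i, hv s u h_split i hi, hv s w hw i hi, cq_eq_coe,
    Quaternion.coeComplex_zero, mul_zero, add_zero]

theorem IsWeyrBasis.span_quaternion {N : V → V} {K : Submodule ℂ V} {a : ℕ → ℕ} {e : ℕ → ℕ → V}
    (h : IsWeyrBasis ℂ N K a e) (hj : ∀ x ∈ K, qj • x ∈ K → x = 0) :
    IsWeyrBasis ℍ[ℝ] N (Submodule.span ℍ[ℝ] (K : Set V)) a e where
  antitone := h.antitone
  map_eq := h.map_eq
  eq_zero := h.eq_zero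
  linearIndepOn := by
    refine linearIndependent_quaternion_of_complex h.linearIndepOn fun x hx hx' => ?_
    have h_le : Submodule.span ℂ (Set.range fun p : {p : ℕ × ℕ | p.2 < a p.1} =>
        Function.uncurry e p) ≤ K :=
      Submodule.span_le.2 (Set.range_subset_iff.2 fun p => h.mem p.1.1 p.1.2)
    exact hj x (h_le hx) (h_le hx')
  span_eq := by rw [← h.span_eq, Submodule.span_span_of_tower]

/-- The generalized eigenspace of a quaternionic map, regarded as a complex linear one. -/
abbrev complexGenEigenspace (T : V →ₗ[ℍ[ℝ]] V) (z : ℂ) : Submodule ℂ V :=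
  Module.End.maxGenEigenspace (T.restrictScalars ℂ) z

/-- The quaternionic subspace generated by the complex generalized eigenspace at `z`; it contains
the one at the conjugate of `z` as well. -/
def quaternionicGenEigenspace (T : V →ₗ[ℍ[ℝ]] V) (z : ℂ) : Submodule ℍ[ℝ] V :=
  Submodule.span ℍ[ℝ] (complexGenEigenspace T z : Set V)

theorem qj_smul_mem_complexGenEigenspace {T : V →ₗ[ℍ[ℝ]] V} {z : ℂ} {v : V}
    (hv : v ∈ complexGenEigenspace T z) :
    qj • v ∈ complexGenEigenspace T (starRingEnd ℂ z) := by
  rw [Module.End.mem_maxGenEigenspace] at hv ⊢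
  obtain ⟨k, hk⟩ := hv
  have h_semiconj : Function.Semiconj (fun v : V => qj • v)
      ⇑(T.restrictScalars ℂ - z • 1 : Module.End ℂ V)
      ⇑(T.restrictScalars ℂ - starRingEnd ℂ z • 1 : Module.End ℂ V) := fun v => by
    simp only [LinearMap.sub_apply, LinearMap.smul_apply, Module.End.one_apply, smul_sub,
      LinearMap.restrictScalars_apply, map_smul, complex_smul_eq, smul_smul, qj_mul_cq]
  refine ⟨k, ?_⟩
  rw [Module.End.pow_apply, ← (h_semiconj.iterate_right k).eq, ← Module.End.pow_apply, hk,
    smul_zero]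

/-- The complex numbers in the closed upper half plane, the possible eigenvalues of a modified
Jordan matrix. -/
@[ext]
structure UpperComplex where
  toComplex : ℂ
  im_nonneg : 0 ≤ toComplex.im

instance : CoeOut UpperComplex ℂ := ⟨UpperComplex.toComplex⟩

/-- The representative in the closed upper half plane of a pair of conjugate complex numbers. -/
def foldConj (z : ℂ) : UpperComplex := ⟨⟨z.re, |z.im|⟩, abs_nonneg _⟩

theorem foldConj_coe (z : UpperComplex) : foldConj z = z :=
  UpperComplex.ext (Complex.ext rfl (abs_of_nonneg z.im_nonneg))

theorem foldConj_conj (z : ℂ) : foldConj (starRingEnd ℂ z) = foldConj z :=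
  UpperComplex.ext (Complex.ext rfl (abs_neg z.im))

theorem foldConj_eq_or_eq_conj (z : ℂ) :
    (foldConj z : ℂ) = z ∨ (foldConj z : ℂ) = starRingEnd ℂ z :=
  (abs_choice z.im).imp (Complex.ext rfl) (Complex.ext rfl)

theorem restrictScalars_quaternionicGenEigenspace_le (T : V →ₗ[ℍ[ℝ]] V) (z : UpperComplex) :
    (quaternionicGenEigenspace T z).restrictScalars ℂ ≤
      ⨆ c ∈ foldConj ⁻¹' {z}, complexGenEigenspace T c :=
  span_quaternion_le (le_biSup (complexGenEigenspace T) (foldConj_coe z)) fun _ hv =>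
    le_biSup (complexGenEigenspace T) ((foldConj_conj z).trans (foldConj_coe z))
      (qj_smul_mem_complexGenEigenspace hv)

theorem iSupIndep_biSup_preimage {α ι κ : Type*} [CompleteLattice α] [IsModularLattice α]
    [IsCompactlyGenerated α] {t : ι → α} (ht : iSupIndep t) (f : ι → κ) :
    iSupIndep fun k => ⨆ i ∈ f ⁻¹' {k}, t i := fun k =>
  (ht.disjoint_biSup_biSup (disjoint_compl_right (a := f ⁻¹' {k}))).mono_right <|
    iSup₂_le fun _ hl => biSup_mono fun _ hi hk => hl (hi.symm.trans hk)

theorem iSupIndep_quaternionicGenEigenspace (T : V →ₗ[ℍ[ℝ]] V) :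
    iSupIndep fun z : UpperComplex => quaternionicGenEigenspace T z := by
  have h_fold := (iSupIndep_biSup_preimage (Module.End.independent_maxGenEigenspace
    (T.restrictScalars ℂ)) foldConj).mono (restrictScalars_quaternionicGenEigenspace_le T)
  refine fun z => Disjoint.of_orderEmbedding (Submodule.restrictScalarsEmbedding ℂ ℍ[ℝ] V) ?_
  simpa only [Submodule.restrictScalarsEmbedding_apply, Submodule.restrictScalars_iSup]
    using h_fold z

theorem complexGenEigenspace_le (T : V →ₗ[ℍ[ℝ]] V) (z : ℂ) :
    complexGenEigenspace T z ≤ (quaternionicGenEigenspace T (foldConj z)).restrictScalars ℂ := by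
  intro v hv
  rw [Submodule.restrictScalars_mem]
  obtain hz | hz := foldConj_eq_or_eq_conj z
  · exact Submodule.subset_span (hz.symm ▸ hv)
  · have hjv : qj • v ∈ quaternionicGenEigenspace T (foldConj z) :=
      Submodule.subset_span (hz ▸ qj_smul_mem_complexGenEigenspace hv)
    rw [← Submodule.neg_mem_iff, ← qj_smul_qj_smul]
    exact Submodule.smul_mem _ qj hjv

theorem iSup_quaternionicGenEigenspace [FiniteDimensional ℍ[ℝ] V] (T : V →ₗ[ℍ[ℝ]] V) :
    ⨆ z : UpperComplex, quaternionicGenEigenspace T z = ⊤ := by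
  refine Submodule.restrictScalars_injective ℂ ℍ[ℝ] V (top_le_iff.1 ?_)
  rw [← Module.End.iSup_maxGenEigenspace_eq_top (T.restrictScalars ℂ),
    Submodule.restrictScalars_iSup]
  exact iSup_le fun z => (complexGenEigenspace_le T z).trans
    (le_iSup (fun w : UpperComplex => (quaternionicGenEigenspace T w).restrictScalars ℂ) _)

theorem map_complexGenEigenspace_le (T : V →ₗ[ℍ[ℝ]] V) (z : ℂ) :
    (complexGenEigenspace T z).map (T.restrictScalars ℂ - algebraMap ℂ (Module.End ℂ V) z) ≤
      complexGenEigenspace T z :=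
  Submodule.map_le_iff_le_comap.2 <| Module.End.mapsTo_maxGenEigenspace_of_comm
    (Algebra.mul_sub_algebraMap_commutes (T.restrictScalars ℂ) z) z

theorem exists_complexGenEigenspace_le_ker_pow [FiniteDimensional ℍ[ℝ] V] (T : V →ₗ[ℍ[ℝ]] V)
    (z : ℂ) : ∃ k : ℕ, complexGenEigenspace T z ≤
      LinearMap.ker ((T.restrictScalars ℂ - algebraMap ℂ (Module.End ℂ V) z) ^ k) :=
  ⟨_, by rw [complexGenEigenspace, Module.End.maxGenEigenspace_eq, Module.End.genEigenspace_nat,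
    Algebra.algebraMap_eq_smul_one]⟩

theorem exists_isWeyrBasis_of_im_ne_zero [FiniteDimensional ℍ[ℝ] V] (T : V →ₗ[ℍ[ℝ]] V) {z : ℂ}
    (hz : z.im ≠ 0) :
    ∃ a e, IsWeyrBasis ℍ[ℝ] (fun v => T v - cq z • v) (quaternionicGenEigenspace T z) a e := by
  obtain ⟨k, hk⟩ := exists_complexGenEigenspace_le_ker_pow T z
  obtain ⟨a, e, h⟩ := exists_isWeyrBasis (map_complexGenEigenspace_le T z) hk
  have h_conj : z ≠ starRingEnd ℂ z := fun h => hz (Complex.conj_eq_iff_im.1 h.symm)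
  have h_disj : Disjoint (complexGenEigenspace T z) (complexGenEigenspace T (starRingEnd ℂ z)) :=
    (Module.End.independent_maxGenEigenspace (T.restrictScalars ℂ)).pairwiseDisjoint h_conj
  refine ⟨a, e, h.span_quaternion fun x hx hjx => ?_⟩
  have h_zero : qj • x = 0 :=
    Submodule.disjoint_def.1 h_disj _ hjx (qj_smul_mem_complexGenEigenspace hx)
  rw [← neg_eq_zero, ← qj_smul_qj_smul, h_zero, smul_zero]

theorem exists_isWeyrBasis_of_im_eq_zero [FiniteDimensional ℍ[ℝ] V] (T : V →ₗ[ℍ[ℝ]] V) {z : ℂ}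
    (hz : z.im = 0) :
    ∃ a e, IsWeyrBasis ℍ[ℝ] (fun v => T v - cq z • v) (quaternionicGenEigenspace T z) a e := by
  let N : Module.End ℍ[ℝ] V := T - Module.End.smulLeft (cq z) (cq_mem_center hz)
  obtain ⟨k, hk⟩ := exists_complexGenEigenspace_le_ker_pow T z
  have h_map : (quaternionicGenEigenspace T z).map N ≤ quaternionicGenEigenspace T z := by
    rw [quaternionicGenEigenspace, Submodule.map_span_le]
    exact fun v hv => Submodule.subset_span (map_complexGenEigenspace_le T z ⟨v, hv, rfl⟩)
  have h_ker : quaternionicGenEigenspace T z ≤ LinearMap.ker (N ^ k) := by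
    refine Submodule.span_le.2 fun v hv => ?_
    have hv0 := LinearMap.mem_ker.1 (hk hv)
    rw [Module.End.pow_apply] at hv0
    rw [SetLike.mem_coe, LinearMap.mem_ker, Module.End.pow_apply]
    exact hv0
  exact exists_isWeyrBasis h_map h_ker

theorem exists_isWeyrBasis_quaternionicGenEigenspace [FiniteDimensional ℍ[ℝ] V]
    (T : V →ₗ[ℍ[ℝ]] V) (z : ℂ) :
    ∃ a e, IsWeyrBasis ℍ[ℝ] (fun v => T v - cq z • v) (quaternionicGenEigenspace T z) a e :=
  (eq_or_ne z.im 0).elim (exists_isWeyrBasis_of_im_eq_zero T) (exists_isWeyrBasis_of_im_ne_zero T)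

end ComplexStructure

section ModifiedJordan

variable {s : ℕ} {sz : Fin s → ℕ} {lam : Fin s → ℂ}

theorem psum_succ (sz : Fin s → ℕ) (t : Fin s) : psum sz ((t : ℕ) + 1) = psum sz t + sz t := by
  rw [psum, Finset.sum_range_succ, dif_pos t.2, psum]

theorem psum_mono (sz : Fin s → ℕ) : Monotone (psum sz) := fun _ _ h =>
  Finset.sum_le_sum_of_subset (Finset.range_mono h)

theorem InBlock.eq {t u : Fin s} {r : ℕ} (ht : InBlock sz t r) (hu : InBlock sz u r) : t = u := by
  have h_le {t u : Fin s} (ht : InBlock sz t r) (hu : InBlock sz u r) : t ≤ u := by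
    by_contra! h
    exact (hu.2.trans_le (psum_mono sz h)).not_ge ht.1
  exact (h_le ht hu).antisymm (h_le hu ht)

theorem finSigmaFinEquiv_eq_psum_add (p : Σ t, Fin (sz t)) :
    (finSigmaFinEquiv p : ℕ) = psum sz p.1 + p.2 := by
  rw [finSigmaFinEquiv_apply, psum, Finset.sum_range]
  congr 1
  refine Finset.sum_congr rfl fun i _ => ?_
  rw [dif_pos (i.2.trans p.1.2)]
  rfl

theorem fst_eq_of_inBlock {p : Σ t, Fin (sz t)} {t : Fin s}
    (h : InBlock sz t (finSigmaFinEquiv p : ℕ)) : p.1 = t := by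
  refine InBlock.eq ⟨?_, ?_⟩ h
  · exact (finSigmaFinEquiv_eq_psum_add p).symm ▸ Nat.le_add_right _ _
  · rw [finSigmaFinEquiv_eq_psum_add, psum_succ]
    exact Nat.add_lt_add_left p.2.2 _

/-- The modified Jordan matrix with blocks of sizes `sz` and eigenvalues `lam`, its rows and columns
being indexed by a block and a position within the block. -/
def modifiedJordan (sz : Fin s → ℕ) (lam : Fin s → ℂ) :
    Matrix (Σ t, Fin (sz t)) (Σ t, Fin (sz t)) ℍ[ℝ] :=
  Matrix.diagonal (fun p => cq (lam p.1)) + Matrix.of fun p q =>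
    if (q.1 : ℕ) = p.1 + 1 ∧ lam p.1 = lam q.1 ∧ (p.2 : ℕ) = q.2 then 1 else 0

theorem modifiedJordan_apply_of_fst_eq {p q : Σ t, Fin (sz t)} (h : p.1 = q.1) :
    modifiedJordan sz lam p q = if p = q then cq (lam p.1) else 0 := by
  have h_next : ¬((q.1 : ℕ) = p.1 + 1 ∧ lam p.1 = lam q.1 ∧ (p.2 : ℕ) = q.2) := fun hq =>
    Nat.succ_ne_self p.1 (hq.1.symm.trans (congrArg Fin.val h.symm))
  rw [modifiedJordan, Matrix.add_apply, Matrix.of_apply, if_neg h_next, add_zero,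
    Matrix.diagonal_apply]

theorem modifiedJordan_apply_of_fst_ne {p q : Σ t, Fin (sz t)} (h : p.1 ≠ q.1) :
    modifiedJordan sz lam p q =
      if (q.1 : ℕ) = p.1 + 1 ∧ lam p.1 = lam q.1 ∧ (p.2 : ℕ) = q.2 then 1 else 0 := by
  rw [modifiedJordan, Matrix.add_apply, Matrix.of_apply,
    Matrix.diagonal_apply_ne _ (mt (congrArg Sigma.fst) h), zero_add]

theorem isModifiedJordan_reindex_modifiedJordan {n : ℕ} (hn : ∑ t, sz t = n) (hpos : ∀ t, 0 < sz t)
    (him : ∀ t, 0 ≤ (lam t).im)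
    (hord : ∀ (t : Fin s) (h : (t : ℕ) + 1 < s), csucceq (lam t) (lam ⟨t + 1, h⟩))
    (hle : ∀ (t : Fin s) (h : (t : ℕ) + 1 < s),
      lam t = lam ⟨t + 1, h⟩ → sz ⟨t + 1, h⟩ ≤ sz t) :
    IsModifiedJordan ((modifiedJordan sz lam).reindex (finSigmaFinEquiv.trans (finCongr hn))
      (finSigmaFinEquiv.trans (finCongr hn))) := by
  subst hn
  refine ⟨s, sz, lam, hpos, rfl, him, hord, ?_, ?_, fun t ht => ⟨?_, fun hl => ⟨hle t ht hl, ?_⟩⟩⟩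
  all_goals
    simp only [finCongr_refl, Equiv.trans_refl, Matrix.reindex_apply, Matrix.submatrix_apply,
      finSigmaFinEquiv.surjective.forall, Equiv.symm_apply_apply, finSigmaFinEquiv.injective.eq_iff]
  · rintro p q t hp hq
    obtain rfl := fst_eq_of_inBlock hp
    exact modifiedJordan_apply_of_fst_eq (fst_eq_of_inBlock hq).symm
  · rintro p q t u hp hq h_ne h_succ
    obtain rfl := fst_eq_of_inBlock hp
    obtain rfl := fst_eq_of_inBlock hq
    rw [modifiedJordan_apply_of_fst_ne fun h => h_ne (congrArg Fin.val h.symm),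
      if_neg fun h => h_succ h.1]
  · rintro hl p q hp hq
    obtain rfl := fst_eq_of_inBlock hp
    have hq := fst_eq_of_inBlock hq
    rw [modifiedJordan_apply_of_fst_ne fun h => hl (congrArg lam (h.trans hq)),
      if_neg fun h => hl (h.2.1.trans (congrArg lam hq))]
  · rintro p q hp hq
    obtain rfl := fst_eq_of_inBlock hp
    have hq := fst_eq_of_inBlock hq
    have hq_val : (q.1 : ℕ) = p.1 + 1 := congrArg Fin.val hq
    have h_ne : p.1 ≠ q.1 := fun h =>
      Nat.succ_ne_self p.1 (hq_val.symm.trans (congrArg Fin.val h.symm))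
    rw [modifiedJordan_apply_of_fst_ne h_ne, finSigmaFinEquiv_eq_psum_add,
      finSigmaFinEquiv_eq_psum_add, hq_val, Nat.add_sub_cancel_left, Nat.add_sub_cancel_left]
    simp only [true_and, hl, hq]

theorem sum_modifiedJordan_smul {V : Type*} [AddCommGroup V] [Module ℍ[ℝ] V]
    (E : (Σ t, Fin (sz t)) → V) (p : Σ t, Fin (sz t)) :
    ∑ q, modifiedJordan sz lam p q • E q = cq (lam p.1) • E p +
      ∑ q : Σ t, Fin (sz t),
        if (q.1 : ℕ) = p.1 + 1 ∧ lam p.1 = lam q.1 ∧ (p.2 : ℕ) = q.2 then E q else 0 := by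
  simp only [modifiedJordan, Matrix.add_apply, Matrix.of_apply, add_smul, Finset.sum_add_distrib,
    Matrix.diagonal_apply, ite_smul, zero_smul, one_smul, Finset.sum_ite_eq, Finset.mem_univ,
    if_true]

theorem similarQ_reindex_of_span_eq_top {ι m : Type*} [Fintype ι] [Fintype m] [DecidableEq m]
    (φ : ι ≃ m) {A : Matrix m m ℍ[ℝ]} {M : Matrix ι ι ℍ[ℝ]} {E : ι → m → ℍ[ℝ]}
    (h_span : Submodule.span ℍ[ℝ] (Set.range E) = ⊤)
    (h_row : ∀ p, E p ᵥ* A = ∑ q, M p q • E q) : SimilarQ A (M.reindex φ φ) := by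
  let S : Matrix m m ℍ[ℝ] := Matrix.of (E ∘ φ.symm)
  have hSA : S * A = M.reindex φ φ * S := by
    ext x c : 1
    calc (S * A) x c = (E (φ.symm x) ᵥ* A) c := rfl
      _ = ∑ q, M (φ.symm x) q * E q c := by
        rw [h_row, Finset.sum_apply]
        rfl
      _ = (M.reindex φ φ * S) x c := by
        rw [Matrix.mul_apply, ← φ.symm.sum_comp]
        rfl
  have h_coord (x : m) : ∃ c : ι → ℍ[ℝ], ∑ q, c q • E q = (1 : Matrix m m ℍ[ℝ]) x :=
    Submodule.mem_span_range_iff_exists_fun _ |>.1 (h_span ▸ Submodule.mem_top)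
  choose R hR using h_coord
  have hRS : Matrix.of (fun x y => R x (φ.symm y)) * S = 1 := by
    ext x c : 1
    rw [← hR, Finset.sum_apply, Matrix.mul_apply, ← φ.symm.sum_comp]
    rfl
  refine ⟨⟨S, _, mul_eq_one_comm.1 hRS, hRS⟩, ?_⟩
  rw [mul_assoc, ← hSA, ← mul_assoc]
  exact (congrArg (· * A) hRS).trans (one_mul A) |>.symm

end ModifiedJordan

section BlockOrder

/-- Decreasing for `⪰`, so that an increasing enumeration lists eigenvalues as in a modified Jordan
matrix. -/
instance : LinearOrder UpperComplex :=
  LinearOrder.lift' (β := (ℝ ×ₗ ℝ)ᵒᵈ) (fun z => OrderDual.toDual (toLex ((z : ℂ).im, (z : ℂ).re)))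
    fun _ _ h => UpperComplex.ext (Complex.ext (congrArg (fun x => (ofLex x).2) h)
      (congrArg (fun x => (ofLex x).1) h))

theorem csucceq_of_le {z w : UpperComplex} (h : z ≤ w) : csucceq z w :=
  (Prod.Lex.toLex_le_toLex.1 h).symm.imp (fun h => ⟨h.2, h.1.symm⟩) id

/-- The value of a doubly indexed family at the label `l = (z, i)` of a row, where `z` is an
eigenvalue and `i` the position of the row in the Weyr basis at `z`. Labels are ordered
lexicographically. -/
abbrev atLabel {Z α : Type*} (f : Z → ℕ → α) (l : Z ×ₗ ℕ) : α := f (ofLex l).1 (ofLex l).2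

/-- The labels of the nonempty rows of a family of Weyr bases with row lengths `a z i`. -/
def rowLabels {Z : Type*} (a : Z → ℕ → ℕ) : Set (Z ×ₗ ℕ) := {l | 0 < atLabel a l}

/-- The label of the row following a given one in the same Weyr basis. -/
def nextLabel {Z : Type*} (l : Z ×ₗ ℕ) : Z ×ₗ ℕ := toLex ((ofLex l).1, (ofLex l).2 + 1)

variable {Z : Type*} [LinearOrder Z]

theorem covBy_nextLabel (l : Z ×ₗ ℕ) : l ⋖ nextLabel l :=
  Prod.Lex.covBy_iff.2 (Or.inl ⟨rfl, Nat.covBy_iff_add_one_eq.2 rfl⟩)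

theorem eq_nextLabel_iff {a : Z → ℕ → ℕ} (ha : ∀ z, Antitone (a z)) {s : ℕ} {b : Fin s ↪o Z ×ₗ ℕ}
    (hb : Set.range b = rowLabels a) {t u : Fin s} :
    b u = nextLabel (b t) ↔ (u : ℕ) = t + 1 ∧ (ofLex (b t)).1 = (ofLex (b u)).1 := by
  have index_eq {t u : Fin s} (h : b u = nextLabel (b t)) : (u : ℕ) = t + 1 := by
    have h_cov : t ⋖ u := CovBy.of_image b (h ▸ covBy_nextLabel (b t))
    exact (Nat.covBy_iff_add_one_eq.1 (Fin.covBy_iff.1 h_cov)).symm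
  refine ⟨fun h => ⟨index_eq h, by rw [h]; rfl⟩, fun ⟨h_index, h_eig⟩ => ?_⟩
  have h_lt : b t < b u := b.lt_iff_lt.2 (Nat.lt_of_succ_le h_index.ge)
  have h_row : (ofLex (b t)).2 < (ofLex (b u)).2 :=
    (Prod.Lex.lt_iff.1 h_lt).elim (fun h => absurd h_eig h.ne) And.right
  have h_mem : nextLabel (b t) ∈ rowLabels a := by
    have hu : b u ∈ rowLabels a := hb ▸ Set.mem_range_self u
    calc 0 < a (ofLex (b u)).1 (ofLex (b u)).2 := hu
      _ ≤ a (ofLex (b t)).1 ((ofLex (b t)).2 + 1) := h_eig ▸ ha _ h_row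
  obtain ⟨v, hv⟩ := hb ▸ h_mem
  rw [← hv, Fin.ext (h_index.trans (index_eq hv).symm)]

end BlockOrder

section Assembly

variable {D V Z : Type*} [DivisionRing D] [AddCommGroup V] [Module D V] {N : Z → V → V}
  {W : Z → Submodule D V} {a : Z → ℕ → ℕ} {e : Z → ℕ → ℕ → V}

theorem linearIndependent_sigma_of_isWeyrBasis
    (h : ∀ z, IsWeyrBasis D (N z) (W z) (a z) (e z)) (hW : iSupIndep W) :
    LinearIndependent D fun x : Σ z, {p : ℕ × ℕ | p.2 < a z p.1} => e x.1 x.2.1.1 x.2.1.2 := by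
  have h_span (z : Z) : Submodule.span D (Set.range fun p : {p : ℕ × ℕ | p.2 < a z p.1} =>
      Function.uncurry (e z) p) ≤ W z :=
    Submodule.span_le.2 (Set.range_subset_iff.2 fun p => (h z).mem p.1.1 p.1.2)
  exact linearIndependent_iUnion_finite (fun z => (h z).linearIndepOn) fun z t _ hzt =>
    (hW.disjoint_biSup hzt).mono (h_span z) (iSup₂_mono fun w _ => h_span w)

theorem finite_rowLabels [FiniteDimensional D V]
    (h : ∀ z, IsWeyrBasis D (N z) (W z) (a z) (e z)) (hW : iSupIndep W) :
    (rowLabels a).Finite := by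
  have := (linearIndependent_sigma_of_isWeyrBasis h hW).finite
  let label (x : Σ z, {p : ℕ × ℕ | p.2 < a z p.1}) : Z ×ₗ ℕ := toLex (x.1, x.2.1.1)
  exact (Set.finite_range label).subset fun l hl =>
    ⟨⟨(ofLex l).1, ⟨((ofLex l).2, 0), hl⟩⟩, rfl⟩

variable {s : ℕ} {b : Fin s → Z ×ₗ ℕ}

theorem linearIndependent_rows (h : ∀ z, IsWeyrBasis D (N z) (W z) (a z) (e z))
    (hW : iSupIndep W) (hb : Function.Injective b) :
    LinearIndependent D fun p : Σ t, Fin (atLabel a (b t)) => atLabel e (b p.1) p.2 := by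
  let f (p : Σ t, Fin (atLabel a (b t))) : Σ z, {p : ℕ × ℕ | p.2 < a z p.1} :=
    ⟨(ofLex (b p.1)).1, ⟨((ofLex (b p.1)).2, p.2), p.2.2⟩⟩
  have f_injective : Function.Injective f := by
    rintro ⟨t, j⟩ ⟨u, k⟩ hf
    have h_eq := congrArg (fun x => (toLex (x.1, x.2.1.1), x.2.1.2)) hf
    obtain rfl : t = u := hb (congrArg Prod.fst h_eq)
    exact Sigma.ext rfl (heq_of_eq (Fin.ext (congrArg Prod.snd h_eq)))
  exact (linearIndependent_sigma_of_isWeyrBasis h hW).comp f f_injective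

theorem span_rows (h : ∀ z, IsWeyrBasis D (N z) (W z) (a z) (e z))
    (hb : Set.range b = rowLabels a) :
    Submodule.span D (Set.range fun p : Σ t, Fin (atLabel a (b t)) => atLabel e (b p.1) p.2) =
      ⨆ z, W z := by
  refine le_antisymm (Submodule.span_le.2 (Set.range_subset_iff.2 fun p => ?_))
    (iSup_le fun z => ?_)
  · exact Submodule.mem_iSup_of_mem _ ((h _).mem _ _)
  · rw [← (h z).span_eq, Submodule.span_le]
    rintro _ ⟨⟨i, j⟩, rfl⟩
    obtain hj | hj := le_or_gt (a z i) j
    · rw [Function.uncurry_apply_pair, (h z).eq_zero i j hj]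
      exact Submodule.zero_mem _
    · obtain ⟨t, ht⟩ : toLex (z, i) ∈ Set.range b := hb ▸ Nat.zero_lt_of_lt hj
      refine Submodule.subset_span ⟨⟨t, ⟨j, ?_⟩⟩, ?_⟩
      · rwa [ht]
      · simp only [ht, atLabel, ofLex_toLex, Function.uncurry_apply_pair]

theorem sum_atLabel_eq_finrank (h : ∀ z, IsWeyrBasis D (N z) (W z) (a z) (e z))
    (hW : iSupIndep W) (hW_top : ⨆ z, W z = ⊤) (hb : Set.range b = rowLabels a)
    (hb_inj : Function.Injective b) : ∑ t, atLabel a (b t) = Module.finrank D V := by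
  have h_span := (span_rows h hb).trans hW_top
  rw [Module.finrank_eq_card_basis (.mk (linearIndependent_rows h hW hb_inj) h_span.ge),
    Fintype.card_sigma]
  simp only [Fintype.card_fin]

theorem sum_ite_nextLabel [DecidableEq Z]
    (h_zero : ∀ z i j, a z i ≤ j → e z i j = 0) (hb : Set.range b = rowLabels a)
    (hb_inj : Function.Injective b) (t : Fin s) (j : ℕ) :
    (∑ q : Σ t, Fin (atLabel a (b t)),
        if b q.1 = nextLabel (b t) ∧ j = q.2 then atLabel e (b q.1) q.2 else 0) =
      atLabel e (nextLabel (b t)) j := by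
  obtain hj | hj := le_or_gt (atLabel a (nextLabel (b t))) j
  · rw [atLabel, h_zero _ _ _ hj]
    refine Finset.sum_eq_zero fun q _ => if_neg fun ⟨hq, hjq⟩ => ?_
    have h_lt := q.2.2
    rw [← hjq, hq] at h_lt
    exact h_lt.not_ge hj
  · obtain ⟨u, hu⟩ : nextLabel (b t) ∈ Set.range b := hb ▸ Nat.zero_lt_of_lt hj
    rw [← hu] at hj ⊢
    rw [Finset.sum_eq_single_of_mem ⟨u, ⟨j, hj⟩⟩ (Finset.mem_univ _), if_pos ⟨rfl, rfl⟩]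
    rintro ⟨v, k⟩ - h_ne
    refine if_neg fun ⟨hv, hk⟩ => h_ne ?_
    obtain rfl : v = u := hb_inj hv
    exact Sigma.ext rfl (heq_of_eq (Fin.ext hk.symm))

theorem rows_vecMul {n s : ℕ} {A : Matrix (Fin n) (Fin n) ℍ[ℝ]}
    {W : UpperComplex → Submodule ℍ[ℝ] (Fin n → ℍ[ℝ])}
    {a : UpperComplex → ℕ → ℕ} {e : UpperComplex → ℕ → ℕ → Fin n → ℍ[ℝ]}
    (h : ∀ z : UpperComplex, IsWeyrBasis ℍ[ℝ] (fun v => v ᵥ* A - cq z • v) (W z) (a z) (e z))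
    {b : Fin s ↪o UpperComplex ×ₗ ℕ} (hb : Set.range b = rowLabels a)
    (p : Σ t, Fin (atLabel a (b t))) :
    atLabel e (b p.1) p.2 ᵥ* A =
      ∑ q : Σ t, Fin (atLabel a (b t)), modifiedJordan (fun t => atLabel a (b t))
        (fun t => (ofLex (b t)).1) p q • atLabel e (b q.1) q.2 := by
  have h_next (q : Σ t, Fin (atLabel a (b t))) :
      ((q.1 : ℕ) = p.1 + 1 ∧ ((ofLex (b p.1)).1 : ℂ) = (ofLex (b q.1)).1 ∧ (p.2 : ℕ) = q.2) ↔
        b q.1 = nextLabel (b p.1) ∧ (p.2 : ℕ) = q.2 := by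
    rw [eq_nextLabel_iff (fun z => (h z).antitone) hb, UpperComplex.ext_iff, and_assoc]
  rw [sum_modifiedJordan_smul (fun q => atLabel e (b q.1) q.2)]
  simp only [h_next]
  rw [sum_ite_nextLabel (fun z => (h z).eq_zero) hb b.injective]
  exact sub_eq_iff_eq_add'.1 ((h _).map_eq _ _)

end Assembly

/-- **Lemma 2.2 (existence).** Every square quaternion matrix is similar over `ℍ` to a
modified Jordan matrix. -/
theorem similar_to_modified_jordan {n : ℕ} (A : Matrix (Fin n) (Fin n) ℍ[ℝ]) :
    ∃ B : Matrix (Fin n) (Fin n) ℍ[ℝ], IsModifiedJordan B ∧ SimilarQ A B := by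
  choose a e h using fun z : UpperComplex =>
    exists_isWeyrBasis_quaternionicGenEigenspace A.vecMulLinear z
  have h_indep := iSupIndep_quaternionicGenEigenspace A.vecMulLinear
  have h_top := iSup_quaternionicGenEigenspace A.vecMulLinear
  have h_fin := finite_rowLabels h h_indep
  let b : Fin _ ↪o UpperComplex ×ₗ ℕ := h_fin.toFinset.orderEmbOfFin rfl
  have hb : Set.range b = rowLabels a :=
    (Finset.range_orderEmbOfFin _ _).trans h_fin.coe_toFinset
  have hn : ∑ t, atLabel a (b t) = n :=
    (sum_atLabel_eq_finrank h h_indep h_top hb b.injective).trans (Module.finrank_fin_fun ℍ[ℝ])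
  refine ⟨_, isModifiedJordan_reindex_modifiedJordan hn (lam := fun t => (ofLex (b t)).1)
    (fun t => hb.le (Set.mem_range_self t)) (fun t => (ofLex (b t)).1.im_nonneg)
    (fun t ht => csucceq_of_le ?_) (fun t ht h_eig => ?_),
    similarQ_reindex_of_span_eq_top _ ((span_rows h hb).trans h_top) (rows_vecMul h hb)⟩
  · exact Prod.Lex.monotone_fst _ _ (b.monotone (Nat.le_succ t))
  · have h_next := (eq_nextLabel_iff (fun z => (h z).antitone) hb (u := ⟨t + 1, ht⟩)).2
      ⟨rfl, UpperComplex.ext h_eig⟩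
    rw [h_next]
    exact (h _).antitone (Nat.le_succ _)
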